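/- Let K = F((t)), O = F[[t]], and let L_1,...,L_n be full-rank O-lattices in K^n. Then there exists a full-rank lattice L such that val(det(L)) + ∑_{i=1}^n c(L,L_i) = A(L_1,...,L_n), where A(L_1,...,L_n) = min { val(det(v_1,...,v_n)) : v_i ∈ L_i } and c(L,L_i) = min over generators w of L of min{λ ∈ ℤ : t^λ w ∈ L_i}. -/

import Mathlib

noncomputable section
open scoped Classical

variable {F : Type*} [Field F] {n : ℕ}

/-- `v` is a basis (over `F[[t]]`) of the full-rank lattice `L` in `K^n`, `K = F((t))`. -/
def IsLatticeBasis (L : Submodule (PowerSeries F) (Fin n → LaurentSeries F))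
    (v : Fin n → Fin n → LaurentSeries F) : Prop :=
  LinearIndependent (LaurentSeries F) v ∧ L = Submodule.span (PowerSeries F) (Set.range v)

/-- `L` is a full-rank `F[[t]]`-lattice in `K^n`. -/
def IsFullLattice (L : Submodule (PowerSeries F) (Fin n → LaurentSeries F)) : Prop :=
  ∃ v, IsLatticeBasis L v

/-- `t^λ` as an element of `K = F((t))`. -/
def tpow (lam : ℤ) : LaurentSeries F := HahnSeries.single lam 1

/-- `val (det L) = d` : the valuation of the determinant of an `O`-basis of `L` is `d`. -/
def HasValDet (L : Submodule (PowerSeries F) (Fin n → LaurentSeries F)) (d : ℤ) : Prop :=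
  ∃ v, IsLatticeBasis L v ∧ (Matrix.of v).det.order = d

/-- `w` is a generator of `L`: it belongs to some `O`-basis of `L`. -/
def IsGen (L : Submodule (PowerSeries F) (Fin n → LaurentSeries F))
    (w : Fin n → LaurentSeries F) : Prop :=
  ∃ v i, IsLatticeBasis L v ∧ v i = w

/-- `c(w, M) = lam`, i.e. `lam = min {μ : t^μ • w ∈ M}`. -/
def CVec (w : Fin n → LaurentSeries F) (M : Submodule (PowerSeries F) (Fin n → LaurentSeries F))
    (lam : ℤ) : Prop :=
  IsLeast {μ : ℤ | (tpow μ : LaurentSeries F) • w ∈ M} lam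

/-- `c(L, M) = c`, i.e. `c` is the minimum of `c(w,M)` over generators `w` of `L`. -/
def CLat (L M : Submodule (PowerSeries F) (Fin n → LaurentSeries F)) (c : ℤ) : Prop :=
  IsLeast {μ : ℤ | ∃ w, IsGen L w ∧ CVec w M μ} c

/-- `A(L_1, ..., L_n) = a` : the minimum of `val (det (v_1, ..., v_n))` over `v_i ∈ L_i`. -/
def AIs (Ls : Fin n → Submodule (PowerSeries F) (Fin n → LaurentSeries F)) (a : ℤ) : Prop :=
  IsLeast {d : ℤ | ∃ v : Fin n → Fin n → LaurentSeries F,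
    (∀ i, v i ∈ Ls i) ∧ (Matrix.of v).det ≠ 0 ∧ (Matrix.of v).det.order = d} a

/-- `x` lies in `t • L`. -/
def MemTL (L : Submodule (PowerSeries F) (Fin n → LaurentSeries F))
    (x : Fin n → LaurentSeries F) : Prop :=
  ∃ y ∈ L, x = (PowerSeries.X : PowerSeries F) • y

end

/-!
Say that a lattice `L` and integers `c_i` are feasible if `L_i ⊆ t^{c_i} L` for all `i`. Every
feasible point satisfies `val (det L) + ∑ c_i ≤ val (det (v_1, ..., v_n))` for `v_i ∈ L_i`, so
there is one with the largest dual value `val (det L) + ∑ c_i`. Let `V_i ⊆ L / tL` be the reduction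
of `t^{-c_i} L_i`. If some of the `V_i` spanned too few dimensions, shrinking `L` to the preimage of
their span and lowering the other `c_i` would increase the dual value. So Rado's theorem gives
linearly independent `y_i ∈ V_i`; lifts of the `y_i` to `t^{-c_i} L_i` form a basis of `L`, their
coefficient matrix being invertible modulo `t`, and the `c_i` are then the invariants `c(L, L_i)`.

For Rado's theorem, shrink the subspaces to a minimal family satisfying the dimension condition. If
a member were a sum of two proper subspaces, neither could replace it, and the two obstructions
would contradict the modular law for dimensions. Hence each member is a line.
-/

open Module Matrix
open scoped Finset PowerSeries LaurentSeries

theorem isAtom_of_supIrred {α : Type*} [Lattice α] [BoundedOrder α] [IsModularLattice α]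
    [ComplementedLattice α] {a : α} (ha : SupIrred a) : IsAtom a := by
  refine ⟨ha.ne_bot, fun b hb => ?_⟩
  obtain ⟨c, hbc⟩ := exists_isCompl (⟨b, hb.le⟩ : Set.Iic a)
  have hsup : b ⊔ c = a := congrArg Subtype.val hbc.sup_eq_top
  have hca : (c : α) = a := (ha.2 hsup).resolve_left hb.ne
  have hc : c = ⊤ := Subtype.ext hca
  rw [hc] at hbc
  exact congrArg Subtype.val (disjoint_top.mp hbc.disjoint)

section Rado

variable {k E ι : Type*} [DivisionRing k] [AddCommGroup E] [Module k E]

/-- Rado's condition for choosing a linearly independent transversal of a family of subspaces: any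
`r` members of the family together span at least `r` dimensions. -/
def RadoCondition (V : ι → Submodule k E) : Prop :=
  ∀ I : Finset ι, #I ≤ finrank k (⨆ i ∈ I, V i : Submodule k E)

namespace RadoCondition

variable {V : ι → Submodule k E}

theorem exists_finrank_sup_le_card [DecidableEq ι] (hV : RadoCondition V) {i : ι}
    {H : Submodule k E} (hH : ¬ RadoCondition (Function.update V i H)) :
    ∃ I : Finset ι, i ∉ I ∧ finrank k (H ⊔ ⨆ j ∈ I, V j : Submodule k E) ≤ #I := by
  obtain ⟨I, hI⟩ := not_forall.mp hH
  rw [not_le] at hI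
  have update_eq {J : Finset ι} (hJ : i ∉ J) :
      ⨆ j ∈ J, Function.update V i H j = ⨆ j ∈ J, V j :=
    biSup_congr fun j hj => Function.update_of_ne (ne_of_mem_of_not_mem hj hJ) H V
  have hi : i ∈ I := by
    by_contra hi
    rw [update_eq hi] at hI
    exact hI.not_ge (hV I)
  refine ⟨I.erase i, I.notMem_erase i, ?_⟩
  rw [← Finset.insert_erase hi, Finset.iSup_insert, Function.update_self,
    update_eq (I.notMem_erase i), Finset.card_insert_of_notMem (I.notMem_erase i)] at hI
  exact Nat.lt_succ_iff.mp hI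

variable [FiniteDimensional k E]

theorem update_or_update [DecidableEq ι] (hV : RadoCondition V) {i : ι} {H H' : Submodule k E}
    (hHH' : H ⊔ H' = V i) :
    RadoCondition (Function.update V i H) ∨ RadoCondition (Function.update V i H') := by
  by_contra! hcontra
  obtain ⟨I, hiI, hI⟩ := hV.exists_finrank_sup_le_card hcontra.1
  obtain ⟨J, hiJ, hJ⟩ := hV.exists_finrank_sup_le_card hcontra.2
  set A := H ⊔ ⨆ j ∈ I, V j
  set B := H' ⊔ ⨆ j ∈ J, V j
  have hsup : #(insert i (I ∪ J)) ≤ finrank k (A ⊔ B : Submodule k E) :=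
    (hV _).trans_eq <| by
      rw [Finset.iSup_insert, Finset.iSup_union, ← hHH', sup_sup_sup_comm]
  have hinf : #(I ∩ J) ≤ finrank k (A ⊓ B : Submodule k E) :=
    (hV _).trans <| Submodule.finrank_mono <| le_inf
      (le_sup_of_le_right <| biSup_mono fun _ => Finset.mem_of_mem_inter_left)
      (le_sup_of_le_right <| biSup_mono fun _ => Finset.mem_of_mem_inter_right)
  rw [Finset.card_insert_of_notMem (by simp [hiI, hiJ])] at hsup
  have := Submodule.finrank_sup_add_finrank_inf_eq A B
  have := Finset.card_union_add_card_inter I J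
  omega

theorem isAtom_of_minimal (hV : Minimal RadoCondition V) (i : ι) : IsAtom (V i) := by
  classical
  have le_of_update {H : Submodule k E} (hle : H ≤ V i)
      (hH : RadoCondition (Function.update V i H)) : V i ≤ H := by
    simpa using hV.2 hH (update_le_self_iff.mpr hle) i
  refine isAtom_of_supIrred ⟨fun hmin => ?_, fun H H' hHH' => ?_⟩
  · simpa [hmin.eq_bot] using hV.1 {i}
  · have hle : H ≤ V i := hHH' ▸ le_sup_left
    have hle' : H' ≤ V i := hHH' ▸ le_sup_right
    exact (hV.1.update_or_update hHH').imp (fun h => hle.antisymm (le_of_update hle h))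
      fun h => hle'.antisymm (le_of_update hle' h)

theorem exists_linearIndependent [Finite ι] (hV : RadoCondition V) :
    ∃ v : ι → E, (∀ i, v i ∈ V i) ∧ LinearIndependent k v := by
  have := Fintype.ofFinite ι
  obtain ⟨U, hUV, hU⟩ := exists_minimal_le_of_wellFoundedLT RadoCondition V hV
  choose v _ hv using fun i => (atom_iff_nonzero_span (U i)).mp (isAtom_of_minimal hU i)
  refine ⟨v, fun i => hUV i (hv i ▸ Submodule.mem_span_singleton_self (v i)), ?_⟩
  rw [linearIndependent_iff_card_le_finrank_span]
  have huniv : ⨆ i ∈ Finset.univ, U i = Submodule.span k (Set.range v) := by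
    simp only [Finset.mem_univ, iSup_pos, hv, Submodule.span_range_eq_iSup]
  exact (hU.1 Finset.univ).trans_eq (by rw [huniv, Set.finrank])

end RadoCondition
end Rado

theorem exists_isUnit_vecMul_eq_zero {k m : Type*} [Field k] [Fintype m] [DecidableEq m]
    (W : Submodule k (m → k)) :
    ∃ (Q : Matrix m m k) (S : Finset m), IsUnit Q ∧ #S = finrank k W ∧
      ∀ x ∈ W, ∀ j ∉ S, (x ᵥ* Q) j = 0 := by
  let b := Basis.sumQuot (finBasis k W) (finBasis k ((m → k) ⧸ W))
  let e := b.indexEquiv (Pi.basisFun k m)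
  let φ : (m → k) ≃ₗ[k] (m → k) := (b.reindex e).equivFun
  refine ⟨(LinearMap.toMatrix' φ.toLinearMap)ᵀ,
    Finset.univ.map (Function.Embedding.inl.trans e.toEmbedding), ?_, by simp, ?_⟩
  · rw [isUnit_transpose, isUnit_iff_isUnit_det, LinearMap.det_toMatrix']
    exact φ.isUnit_det'
  · intro x hx j hj
    obtain ⟨l | l, rfl⟩ := e.surjective j
    · simp at hj
    · rw [vecMul_transpose, LinearMap.toMatrix'_mulVec]
      simpa only [φ, LinearEquiv.coe_coe, Basis.equivFun_apply, Basis.repr_reindex_apply,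
        e.symm_apply_apply] using Basis.sumQuot_repr_inr_of_mem _ _ x hx l

section LaurentSeries

variable {F : Type*} [Field F]

theorem tpow_zero : (tpow 0 : F⸨X⸩) = 1 := rfl

theorem tpow_ne_zero (c : ℤ) : (tpow c : F⸨X⸩) ≠ 0 := by
  simp [tpow]

theorem order_tpow (c : ℤ) : (tpow c : F⸨X⸩).order = c :=
  HahnSeries.order_single one_ne_zero

theorem tpow_add (c d : ℤ) : (tpow (c + d) : F⸨X⸩) = tpow c * tpow d := by
  simp [tpow]

theorem order_tpow_mul (c : ℤ) {x : F⸨X⸩} (hx : x ≠ 0) : (tpow c * x).order = c + x.order := by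
  rw [HahnSeries.order_mul (tpow_ne_zero c) hx, order_tpow]

theorem tpow_sum {m : Type*} (s : Finset m) (c : m → ℤ) :
    (tpow (∑ i ∈ s, c i) : F⸨X⸩) = ∏ i ∈ s, tpow (c i) := by
  classical
  induction s using Finset.induction_on with
  | empty => simp [tpow_zero]
  | insert i s hi ih => rw [Finset.sum_insert hi, Finset.prod_insert hi, tpow_add, ih]

theorem algebraMap_X_pow (d : ℕ) : algebraMap F⟦X⟧ F⸨X⸩ (PowerSeries.X ^ d) = tpow d :=
  HahnSeries.ofPowerSeries_X_pow d

theorem algebraMap_powerSeries_ne_zero {p : F⟦X⟧} (hp : p ≠ 0) : algebraMap F⟦X⟧ F⸨X⸩ p ≠ 0 :=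
  (FaithfulSMul.algebraMap_eq_zero_iff F⟦X⟧ F⸨X⸩).not.mpr hp

theorem order_algebraMap_nonneg (p : F⟦X⟧) : 0 ≤ (algebraMap F⟦X⟧ F⸨X⸩ p).order := by
  rcases eq_or_ne p 0 with rfl | hp
  · simp
  · rw [HahnSeries.le_order_iff_forall (algebraMap_powerSeries_ne_zero hp)]
    intro j hj
    rw [LaurentSeries.coe_algebraMap, PowerSeries.coeff_coe, if_pos hj]

theorem order_algebraMap_of_associated {d : ℕ} {p : F⟦X⟧} (hp : Associated (PowerSeries.X ^ d) p) :
    (algebraMap F⟦X⟧ F⸨X⸩ p).order = d := by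
  obtain ⟨u, rfl⟩ := hp
  have order_unit : (algebraMap F⟦X⟧ F⸨X⸩ u).order = 0 := by
    have hmul : algebraMap F⟦X⟧ F⸨X⸩ u * algebraMap F⟦X⟧ F⸨X⸩ ↑u⁻¹ = 1 := by
      rw [← map_mul, Units.mul_inv, map_one]
    have hsum := congrArg HahnSeries.order hmul
    rw [HahnSeries.order_mul (left_ne_zero_of_mul_eq_one hmul) (right_ne_zero_of_mul_eq_one hmul),
      HahnSeries.order_one] at hsum
    linarith [order_algebraMap_nonneg (u : F⟦X⟧), order_algebraMap_nonneg (↑u⁻¹ : F⟦X⟧)]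
  rw [map_mul, algebraMap_X_pow, order_tpow_mul _ (algebraMap_powerSeries_ne_zero u.ne_zero),
    order_unit, add_zero]

end LaurentSeries

section ScaledRowMap

variable {F m : Type*} [Field F] [Fintype m]

/-- The parametrization `p ↦ t^c • ∑ j, p j • B j` of `t^c • L`, where `L` is the
`F[[t]]`-span of the rows `B j` of `B`. -/
noncomputable def scaledRowMap (B : Matrix m m F⸨X⸩) (c : ℤ) :
    (m → F⟦X⟧) →ₗ[F⟦X⟧] (m → F⸨X⸩) :=
  (tpow c : F⸨X⸩) • (B.vecMulLinear.restrictScalars F⟦X⟧ ∘ₗ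
    (Algebra.linearMap F⟦X⟧ F⸨X⸩).compLeft m)

theorem scaledRowMap_apply (B : Matrix m m F⸨X⸩) (c : ℤ) (p : m → F⟦X⟧) :
    scaledRowMap B c p = (tpow c : F⸨X⸩) • ((algebraMap F⟦X⟧ F⸨X⸩ ∘ p) ᵥ* B) :=
  rfl

theorem tpow_smul_scaledRowMap (B : Matrix m m F⸨X⸩) (c d : ℤ) (p : m → F⟦X⟧) :
    (tpow d : F⸨X⸩) • scaledRowMap B c p = scaledRowMap B (d + c) p := by
  rw [scaledRowMap_apply, scaledRowMap_apply, smul_smul, tpow_add]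

theorem scaledRowMap_X_smul (B : Matrix m m F⸨X⸩) (c : ℤ) (p : m → F⟦X⟧) :
    scaledRowMap B c ((PowerSeries.X : F⟦X⟧) • p) = scaledRowMap B (c + 1) p := by
  have hX : algebraMap F⟦X⟧ F⸨X⸩ PowerSeries.X = tpow 1 := by simpa using algebraMap_X_pow 1
  rw [map_smul, add_comm c, ← tpow_smul_scaledRowMap, ← hX, algebraMap_smul]

theorem scaledRowMap_map_mul (P : Matrix m m F⟦X⟧) (B : Matrix m m F⸨X⸩) (c : ℤ)
    (q : m → F⟦X⟧) :
    scaledRowMap (P.map (algebraMap F⟦X⟧ F⸨X⸩) * B) c q = scaledRowMap B c (q ᵥ* P) := by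
  rw [scaledRowMap_apply, scaledRowMap_apply, ← vecMul_vecMul]
  congr 2
  ext1 j
  exact (RingHom.map_vecMul (algebraMap F⟦X⟧ F⸨X⸩) P q j).symm

theorem range_scaledRowMap_zero (B : Matrix m m F⸨X⸩) :
    LinearMap.range (scaledRowMap B 0) = Submodule.span F⟦X⟧ (Set.range B) := by
  ext x
  refine Iff.trans ?_ (Submodule.mem_span_range_iff_exists_fun _).symm
  simp only [LinearMap.mem_range, scaledRowMap_apply, tpow_zero, one_smul, vecMul_eq_sum,
    Function.comp_apply, algebraMap_smul]

variable [DecidableEq m]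

theorem scaledRowMap_single (B : Matrix m m F⸨X⸩) (c : ℤ) (i : m) :
    scaledRowMap B c (Pi.single i 1) = (tpow c : F⸨X⸩) • B i := by
  have hsingle : algebraMap F⟦X⟧ F⸨X⸩ ∘ Pi.single i 1 = Pi.single i 1 := by
    ext1 j
    simp [Pi.single_apply, apply_ite]
  rw [scaledRowMap_apply, hsingle, single_one_vecMul, row]

theorem det_of_scaledRowMap (B : Matrix m m F⸨X⸩) (c : m → ℤ) (P : Matrix m m F⟦X⟧) :
    (of fun i => scaledRowMap B (c i) (P i)).det =
      tpow (∑ i, c i) * algebraMap F⟦X⟧ F⸨X⸩ P.det * B.det := by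
  have hmul : (of fun i => scaledRowMap B (c i) (P i)) =
      diagonal (fun i => tpow (c i)) * (P.map (algebraMap F⟦X⟧ F⸨X⸩) * B) := by
    ext i j
    rw [diagonal_mul]
    rfl
  rw [hmul, det_mul, det_mul, det_diagonal, ← tpow_sum, RingHom.map_det, RingHom.mapMatrix_apply,
    mul_assoc]

theorem det_of_tpow_smul (B : Matrix m m F⸨X⸩) (c : m → ℤ) :
    (of fun i => (tpow (c i) : F⸨X⸩) • B i).det = tpow (∑ i, c i) * B.det := by
  rw [tpow_sum]
  exact det_mul_column (fun i => tpow (c i)) B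

variable {P : Matrix m m F⟦X⟧} {B : Matrix m m F⸨X⸩} {d : ℕ}

theorem algebraMap_det_ne_zero (hP : Associated (PowerSeries.X ^ d) P.det) :
    algebraMap F⟦X⟧ F⸨X⸩ P.det ≠ 0 :=
  algebraMap_powerSeries_ne_zero (hP.ne_zero_iff.mp (pow_ne_zero d PowerSeries.X_ne_zero))

theorem det_map_mul_ne_zero (hP : Associated (PowerSeries.X ^ d) P.det) (hB : B.det ≠ 0) :
    (P.map (algebraMap F⟦X⟧ F⸨X⸩) * B).det ≠ 0 := by
  rw [det_mul, ← RingHom.mapMatrix_apply, ← RingHom.map_det]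
  exact mul_ne_zero (algebraMap_det_ne_zero hP) hB

theorem order_det_map_mul (hP : Associated (PowerSeries.X ^ d) P.det) (hB : B.det ≠ 0) :
    (P.map (algebraMap F⟦X⟧ F⸨X⸩) * B).det.order = d + B.det.order := by
  rw [det_mul, ← RingHom.mapMatrix_apply, ← RingHom.map_det,
    HahnSeries.order_mul (algebraMap_det_ne_zero hP) hB, order_algebraMap_of_associated hP]

end ScaledRowMap

section Reduction

variable {F m : Type*} [Field F] [Fintype m] [DecidableEq m]

theorem isUnit_det_of_linearIndependent_constantCoeff {P : Matrix m m F⟦X⟧}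
    (hP : LinearIndependent F (P.map PowerSeries.constantCoeff)) : IsUnit P.det := by
  rw [PowerSeries.isUnit_iff_constantCoeff, RingHom.map_det, RingHom.mapMatrix_apply,
    ← isUnit_iff_isUnit_det]
  exact linearIndependent_rows_iff_isUnit.mp hP

/-- The rows of `P` generate the lattice of all vectors over `F[[t]]` with reduction in `W`; its
colength is the codimension of `W`. -/
theorem exists_matrix_vecMul_eq_of_constantCoeff_mem (W : Submodule F (m → F)) :
    ∃ (P : Matrix m m F⟦X⟧) (d : ℕ), finrank F W + d = Fintype.card m ∧
      Associated (PowerSeries.X ^ d) P.det ∧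
      ∀ p : m → F⟦X⟧, PowerSeries.constantCoeff ∘ p ∈ W → ∃ q, q ᵥ* P = p := by
  obtain ⟨Q, S, hQ, hS, hW⟩ := exists_isUnit_vecMul_eq_zero W
  let C : F →+* F⟦X⟧ := PowerSeries.C
  let δ : m → F⟦X⟧ := fun j => if j ∈ S then 1 else PowerSeries.X
  have hCQ : IsUnit (C.mapMatrix Q) := hQ.map C.mapMatrix
  refine ⟨diagonal δ * (C.mapMatrix Q)⁻¹, #Sᶜ, by rw [← hS, Finset.card_add_card_compl], ?_,
    fun p hp => ?_⟩
  · have hδ : (diagonal δ).det = PowerSeries.X ^ #Sᶜ := by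
      simp [δ, Finset.prod_ite, Finset.filter_notMem_eq_sdiff, Finset.compl_eq_univ_sdiff]
    rw [det_mul, hδ]
    exact associated_mul_unit_right _ _
      ((isUnit_iff_isUnit_det _).mp (isUnit_nonsing_inv_iff.mpr hCQ))
  · have exists_quotient (j : m) : ∃ a, a * δ j = (p ᵥ* C.mapMatrix Q) j := by
      by_cases hj : j ∈ S
      · exact ⟨_, by rw [show δ j = 1 from if_pos hj, mul_one]⟩
      · have hcoeff : PowerSeries.constantCoeff ((p ᵥ* C.mapMatrix Q) j) = 0 := by
          rw [RingHom.map_vecMul, ← hW _ hp j hj]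
          congr 2
        obtain ⟨a, ha⟩ := PowerSeries.X_dvd_iff.mpr hcoeff
        exact ⟨a, by rw [show δ j = PowerSeries.X from if_neg hj, ha, mul_comm]⟩
    choose q hq using exists_quotient
    have hqδ : q ᵥ* diagonal δ = p ᵥ* C.mapMatrix Q := by
      ext1 j
      rw [vecMul_diagonal, hq]
    refine ⟨q, ?_⟩
    rw [← vecMul_vecMul, hqδ, vecMul_vecMul,
      mul_nonsing_inv _ ((isUnit_iff_isUnit_det _).mp hCQ), vecMul_one]

end Reduction

section Feasible

variable {F m : Type*} [Field F] [Fintype m] [DecidableEq m]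

/-- Feasible points of the dual problem: the rows of `B` are a basis of a lattice `L` such that
`L_i ⊆ t^{c_i} L` for every `i`. These are the analogue of the feasible vertex labellings in the
Kuhn–Munkres theorem. -/
def IsFeasible (Ls : m → Submodule F⟦X⟧ (m → F⸨X⸩)) (B : Matrix m m F⸨X⸩) (c : m → ℤ) : Prop :=
  B.det ≠ 0 ∧ ∀ i, Ls i ≤ LinearMap.range (scaledRowMap B (c i))

/-- The subspace of `L / tL ≅ F^m` given by the reductions of the vectors of `t^{-c} M` that lie in
`L`, where `L` is the lattice spanned by the rows of `B`. -/
noncomputable def leadingSubspace (B : Matrix m m F⸨X⸩) (c : ℤ)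
    (M : Submodule F⟦X⟧ (m → F⸨X⸩)) : Submodule F (m → F) where
  carrier := {y | ∃ p, scaledRowMap B c p ∈ M ∧ PowerSeries.constantCoeff ∘ p = y}
  add_mem' := by
    rintro _ _ ⟨p, hp, rfl⟩ ⟨q, hq, rfl⟩
    exact ⟨p + q, by simpa using M.add_mem hp hq, by ext; simp⟩
  zero_mem' := ⟨0, by simp, by ext; simp⟩
  smul_mem' := by
    rintro r _ ⟨p, hp, rfl⟩
    exact ⟨PowerSeries.C r • p, by simpa using M.smul_mem _ hp, by ext; simp⟩

namespace IsFeasible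

variable {Ls : m → Submodule F⟦X⟧ (m → F⸨X⸩)} {B : Matrix m m F⸨X⸩} {c : m → ℤ}

theorem order_det_add_sum_le (h : IsFeasible Ls B c) {v : Matrix m m F⸨X⸩}
    (hv : ∀ i, v i ∈ Ls i) (hv0 : v.det ≠ 0) : B.det.order + ∑ i, c i ≤ v.det.order := by
  obtain ⟨P, hP⟩ : ∃ P : Matrix m m F⟦X⟧, ∀ i, scaledRowMap B (c i) (P i) = v i :=
    Classical.skolem.mp fun i => h.2 i (hv i)
  have hdet : v.det = tpow (∑ i, c i) * algebraMap F⟦X⟧ F⸨X⸩ P.det * B.det := by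
    rw [← det_of_scaledRowMap]
    exact congrArg det (funext fun i => (hP i).symm)
  rw [mul_assoc] at hdet
  have hPB : algebraMap F⟦X⟧ F⸨X⸩ P.det * B.det ≠ 0 := right_ne_zero_of_mul (hdet ▸ hv0)
  rw [hdet, order_tpow_mul _ hPB, HahnSeries.order_mul (left_ne_zero_of_mul hPB) h.1]
  linarith [order_algebraMap_nonneg P.det]

theorem map_mul {P : Matrix m m F⟦X⟧} {d : ℕ} (h : IsFeasible Ls B c)
    (hP : Associated (PowerSeries.X ^ d) P.det) {c' : m → ℤ}
    (hc' : ∀ i p, scaledRowMap B (c i) p ∈ Ls i →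
      ∃ q, scaledRowMap B (c' i) (q ᵥ* P) = scaledRowMap B (c i) p) :
    IsFeasible Ls (P.map (algebraMap F⟦X⟧ F⸨X⸩) * B) c' := by
  refine ⟨det_map_mul_ne_zero hP h.1, fun i x hx => ?_⟩
  obtain ⟨p, rfl⟩ := h.2 i hx
  obtain ⟨q, hq⟩ := hc' i p hx
  exact ⟨q, by rw [scaledRowMap_map_mul, hq]⟩

/-- Pass to the preimage in `L` of the span `W` of the leading subspaces indexed by `I`, and lower
`c_i` by one for `i ∉ I`: the dual value changes by `n - dim W - (n - #I) > 0`. -/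
theorem exists_lt_of_finrank_lt (h : IsFeasible Ls B c) {I : Finset m}
    (hI : finrank F (⨆ i ∈ I, leadingSubspace B (c i) (Ls i) : Submodule F (m → F)) < #I) :
    ∃ B' c', IsFeasible Ls B' c' ∧ B.det.order + ∑ i, c i < B'.det.order + ∑ i, c' i := by
  set W : Submodule F (m → F) := ⨆ i ∈ I, leadingSubspace B (c i) (Ls i)
  obtain ⟨P, d, hd, hP, hPW⟩ := exists_matrix_vecMul_eq_of_constantCoeff_mem W
  let c' : m → ℤ := fun i => c i - if i ∈ I then 0 else 1
  refine ⟨P.map (algebraMap F⟦X⟧ F⸨X⸩) * B, c', h.map_mul hP fun i p hp => ?_, ?_⟩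
  · by_cases hi : i ∈ I
    · have hpW : PowerSeries.constantCoeff ∘ p ∈ W :=
        Submodule.mem_iSup_of_mem i (Submodule.mem_iSup_of_mem hi ⟨p, hp, rfl⟩)
      obtain ⟨q, hq⟩ := hPW p hpW
      exact ⟨q, by simp [c', hi, hq]⟩
    · have hXpW : PowerSeries.constantCoeff ∘ ((PowerSeries.X : F⟦X⟧) • p) ∈ W := by
        convert W.zero_mem
        ext; simp
      obtain ⟨q, hq⟩ := hPW _ hXpW
      exact ⟨q, by rw [hq, scaledRowMap_X_smul]; simp [c', hi]⟩
  · have hsum : ∑ i, c' i = ∑ i, c i - #Iᶜ := by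
      simp [c', Finset.sum_sub_distrib, Finset.sum_ite, Finset.filter_notMem_eq_sdiff,
        Finset.compl_eq_univ_sdiff]
    have hcard := Finset.card_add_card_compl I
    rw [order_det_map_mul hP h.1, hsum]
    omega

theorem exists_tight_of_radoCondition (h : IsFeasible Ls B c)
    (hrado : RadoCondition fun i => leadingSubspace B (c i) (Ls i)) :
    ∃ B', IsFeasible Ls B' c ∧ ∀ i, (tpow (c i) : F⸨X⸩) • B' i ∈ Ls i := by
  obtain ⟨y, hy, hy_indep⟩ := hrado.exists_linearIndependent
  obtain ⟨P, hP⟩ : ∃ P : Matrix m m F⟦X⟧, ∀ i,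
      scaledRowMap B (c i) (P i) ∈ Ls i ∧ PowerSeries.constantCoeff ∘ P i = y i :=
    Classical.skolem.mp hy
  have hPy : P.map PowerSeries.constantCoeff = y := funext fun i => (hP i).2
  have hPdet : IsUnit P.det :=
    isUnit_det_of_linearIndependent_constantCoeff (by rwa [hPy])
  have hassoc : Associated (PowerSeries.X ^ 0) P.det := by
    simpa using (associated_one_iff_isUnit.mpr hPdet).symm
  refine ⟨P.map (algebraMap F⟦X⟧ F⸨X⸩) * B, h.map_mul hassoc fun i p _ => ⟨p ᵥ* P⁻¹, ?_⟩,
    fun i => ?_⟩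
  · rw [vecMul_vecMul, nonsing_inv_mul _ hPdet, vecMul_one]
  · rw [← scaledRowMap_single, scaledRowMap_map_mul, single_one_vecMul]
    exact (hP i).1

end IsFeasible

theorem exists_le_range_scaledRowMap_one {M : Submodule F⟦X⟧ (m → F⸨X⸩)} (hM : M.FG) :
    ∃ c : ℤ, M ≤ LinearMap.range (scaledRowMap 1 c) := by
  obtain ⟨r, g, rfl⟩ := Submodule.fg_iff_exists_fin_generating_family.mp hM
  obtain ⟨⟨_, d, rfl⟩, hd⟩ := IsLocalization.exist_integer_multiples_of_finite
    (Submonoid.powers (PowerSeries.X : F⟦X⟧)) fun s : Fin r × m => g s.1 s.2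
  refine ⟨-d, Submodule.span_le.mpr ?_⟩
  rintro _ ⟨s, rfl⟩
  choose p hp using fun j => hd (s, j)
  refine ⟨p, ?_⟩
  have hpg : algebraMap F⟦X⟧ F⸨X⸩ ∘ p = (tpow d : F⸨X⸩) • g s := by
    ext1 j
    rw [Function.comp_apply, hp, Algebra.smul_def, algebraMap_X_pow]
    rfl
  rw [scaledRowMap_apply, vecMul_one, hpg, smul_smul, ← tpow_add, neg_add_cancel, tpow_zero,
    one_smul]

theorem exists_isFeasible {Ls : m → Submodule F⟦X⟧ (m → F⸨X⸩)} (hLs : ∀ i, (Ls i).FG) :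
    ∃ B c, IsFeasible Ls B c := by
  choose c hc using fun i => exists_le_range_scaledRowMap_one (hLs i)
  exact ⟨1, c, by simp, hc⟩

theorem exists_isFeasible_tight {Ls : m → Submodule F⟦X⟧ (m → F⸨X⸩)} (hLs : ∀ i, (Ls i).FG)
    {v : Matrix m m F⸨X⸩} (hv : ∀ i, v i ∈ Ls i) (hv0 : v.det ≠ 0) :
    ∃ B c, IsFeasible Ls B c ∧ ∀ i, (tpow (c i) : F⸨X⸩) • B i ∈ Ls i := by
  obtain ⟨B₀, c₀, h₀⟩ := exists_isFeasible hLs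
  obtain ⟨_, ⟨B, c, h, rfl⟩, hmax⟩ := Int.exists_greatest_of_bdd
    (P := fun z => ∃ B c, IsFeasible Ls B c ∧ B.det.order + ∑ i, c i = z)
    ⟨v.det.order, by rintro _ ⟨B, c, h, rfl⟩; exact h.order_det_add_sum_le hv hv0⟩
    ⟨_, B₀, c₀, h₀, rfl⟩
  have hrado : RadoCondition fun i => leadingSubspace B (c i) (Ls i) := by
    by_contra hrado
    obtain ⟨I, hI⟩ := not_forall.mp hrado
    obtain ⟨B', c', h', hlt⟩ := h.exists_lt_of_finrank_lt (not_le.mp hI)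
    exact hlt.not_ge (hmax _ ⟨B', c', h', rfl⟩)
  obtain ⟨B', h', htight⟩ := h.exists_tight_of_radoCondition hrado
  exact ⟨B', c, h', htight⟩

end Feasible

section Lattice

variable {F : Type*} [Field F] {n : ℕ}

theorem isLatticeBasis_of_det_ne_zero {B : Matrix (Fin n) (Fin n) F⸨X⸩} (hB : B.det ≠ 0) :
    IsLatticeBasis (Submodule.span F⟦X⟧ (Set.range B)) B :=
  ⟨linearIndependent_rows_of_det_ne_zero hB, rfl⟩

theorem IsFullLattice.fg {L : Submodule F⟦X⟧ (Fin n → F⸨X⸩)} (hL : IsFullLattice L) : L.FG := by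
  obtain ⟨b, -, rfl⟩ := hL
  exact Submodule.fg_span (Set.finite_range b)

theorem nonneg_of_tpow_smul_mem_of_isGen {L : Submodule F⟦X⟧ (Fin n → F⸨X⸩)} {w : Fin n → F⸨X⸩}
    (hw : IsGen L w) {d : ℤ} (hd : (tpow d : F⸨X⸩) • w ∈ L) : 0 ≤ d := by
  obtain ⟨b, i, ⟨hb, rfl⟩, rfl⟩ := hw
  obtain ⟨p, hp⟩ := Submodule.mem_span_range_iff_exists_fun _ |>.mp hd
  have hcoeff : algebraMap F⟦X⟧ F⸨X⸩ ∘ p = Pi.single i (tpow d) := by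
    rw [linearIndependent_iff_injective_fintypeLinearCombination] at hb
    apply hb
    rw [Fintype.linearCombination_apply_single]
    simpa only [Fintype.linearCombination_apply, Function.comp_apply, algebraMap_smul] using hp
  have hpi : algebraMap F⟦X⟧ F⸨X⸩ (p i) = tpow d := by simpa using congrFun hcoeff i
  rw [← order_tpow (F := F) d, ← hpi]
  exact order_algebraMap_nonneg (p i)

theorem cLat_of_tight {L M : Submodule F⟦X⟧ (Fin n → F⸨X⸩)} {w : Fin n → F⸨X⸩} {c : ℤ}
    (hw : IsGen L w) (hwM : (tpow c : F⸨X⸩) • w ∈ M) (hML : ∀ x ∈ M, (tpow (-c) : F⸨X⸩) • x ∈ L) :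
    CLat L M c := by
  have le_of_mem {u : Fin n → F⸨X⸩} (hu : IsGen L u) {d : ℤ}
      (hd : (tpow d : F⸨X⸩) • u ∈ M) : c ≤ d := by
    have hmem := hML _ hd
    rw [smul_smul, ← tpow_add] at hmem
    linarith [nonneg_of_tpow_smul_mem_of_isGen hu hmem]
  refine ⟨⟨w, hw, hwM, fun d hd => le_of_mem hw hd⟩, ?_⟩
  rintro d ⟨u, hu, hud, -⟩
  exact le_of_mem hu hud

theorem IsFeasible.cLat {Ls : Fin n → Submodule F⟦X⟧ (Fin n → F⸨X⸩)}
    {B : Matrix (Fin n) (Fin n) F⸨X⸩} {c : Fin n → ℤ} (h : IsFeasible Ls B c) {i : Fin n}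
    (hi : (tpow (c i) : F⸨X⸩) • B i ∈ Ls i) :
    CLat (Submodule.span F⟦X⟧ (Set.range B)) (Ls i) (c i) := by
  refine cLat_of_tight ⟨B, i, isLatticeBasis_of_det_ne_zero h.1, rfl⟩ hi fun x hx => ?_
  obtain ⟨p, rfl⟩ := h.2 i hx
  rw [← range_scaledRowMap_zero, tpow_smul_scaledRowMap, neg_add_cancel]
  exact ⟨p, rfl⟩

end Lattice

theorem exists_lattice_valDet_add_sum_c_eq_A_general {F : Type*} [Field F] {n : ℕ}
    (Ls : Fin n → Submodule (PowerSeries F) (Fin n → LaurentSeries F))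
    (hLs : ∀ i, (Ls i).FG) (a : ℤ) (ha : AIs Ls a) :
    ∃ (L : Submodule (PowerSeries F) (Fin n → LaurentSeries F)) (dL : ℤ) (c : Fin n → ℤ),
      IsFullLattice L ∧ HasValDet L dL ∧ (∀ i, CLat L (Ls i) (c i)) ∧
        dL + ∑ i, c i = a := by
  obtain ⟨⟨v, hv, hv0, rfl⟩, hmin⟩ := ha
  obtain ⟨B, c, hfeas, htight⟩ := exists_isFeasible_tight hLs hv hv0
  have hbasis := isLatticeBasis_of_det_ne_zero hfeas.1
  have hne : (of fun i => (tpow (c i) : F⸨X⸩) • B i).det ≠ 0 := by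
    rw [det_of_tpow_smul]
    exact mul_ne_zero (tpow_ne_zero _) hfeas.1
  have horder : (of fun i => (tpow (c i) : F⸨X⸩) • B i).det.order =
      B.det.order + ∑ i, c i := by
    rw [det_of_tpow_smul, order_tpow_mul _ hfeas.1, add_comm]
  refine ⟨_, B.det.order, c, ⟨B, hbasis⟩, ⟨B, hbasis, rfl⟩, fun i => hfeas.cLat (htight i),
    le_antisymm (hfeas.order_det_add_sum_le hv hv0) ?_⟩
  exact horder ▸ hmin ⟨_, htight, hne, rfl⟩

/-- **Linearized Kuhn–Munkres theorem.** For full-rank lattices `L_1, ..., L_n` in `K^n`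
with `A(L_1, ..., L_n) = a` the minimal valuation of `det (v_1, ..., v_n)` over
`v_i ∈ L_i`, there is a full-rank lattice `L` with
`val (det L) + ∑ i, c(L, L_i) = A(L_1, ..., L_n)`. -/
theorem exists_lattice_valDet_add_sum_c_eq_A {F : Type*} [Field F] {n : ℕ}
    (Ls : Fin n → Submodule (PowerSeries F) (Fin n → LaurentSeries F))
    (hLs : ∀ i, IsFullLattice (Ls i))
    (a : ℤ) (ha : AIs Ls a) :
    ∃ (L : Submodule (PowerSeries F) (Fin n → LaurentSeries F)) (dL : ℤ) (c : Fin n → ℤ),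
      IsFullLattice L ∧ HasValDet L dL ∧ (∀ i, CLat L (Ls i) (c i)) ∧
        dL + ∑ i, c i = a :=
  exists_lattice_valDet_add_sum_c_eq_A_general Ls (fun i => (hLs i).fg) a ha
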